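/- The quotient group Λ8♯/Λ8 has exactly 256 elements, consisting of: the zero coset; exactly 120 cosets of minimal norm 1; and exactly 135 cosets of minimal norm 2; moreover every nonzero coset has order 2. Here the minimal norm of a coset is the minimum of ‖x‖² over x in the coset. -/

import Mathlib

noncomputable section

open scoped RealInnerProductSpace

/-- `ℝ^n` with the standard inner product. -/
abbrev E (n : ℕ) := EuclideanSpace ℝ (Fin n)

/-- The standard basis vector `ε i`. -/
def εv {n : ℕ} (i : Fin n) : E n := EuclideanSpace.single i 1

/-- The vector of `ℝ^n` with the given coordinates. -/
def vec {n : ℕ} (x : Fin n → ℝ) : E n := (WithLp.equiv 2 (Fin n → ℝ)).symm x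

/-- The vector of `ℝ^n` with the given integer coordinates. -/
def intVec {n : ℕ} (x : Fin n → ℤ) : E n := (WithLp.equiv 2 (Fin n → ℝ)).symm fun i => (x i : ℝ)

/-- A lattice is integral if all pairwise inner products of its elements are integers. -/
def LatticeIsIntegral {n : ℕ} (L : Submodule ℤ (E n)) : Prop :=
  ∀ x ∈ L, ∀ y ∈ L, ∃ k : ℤ, ⟪x, y⟫ = (k : ℝ)

/-- Two lattices are isometric if a linear isometry of the ambient space carries
one onto the other. -/
def IsometricLattices {n : ℕ} (L M : Submodule ℤ (E n)) : Prop :=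
  ∃ g : E n ≃ₗᵢ[ℝ] E n, g '' (L : Set (E n)) = (M : Set (E n))

/-- The binary code `H ⊆ 𝔽₂⁸` spanned by `(1,1,1,1,0,0,0,0)`, `(1,1,0,0,1,1,0,0)`,
`(1,0,1,0,1,0,1,0)`, `(0,1,0,1,0,1,0,1)`. -/
def code8 : Submodule (ZMod 2) (Fin 8 → ZMod 2) :=
  Submodule.span (ZMod 2)
    {![1, 1, 1, 1, 0, 0, 0, 0], ![1, 1, 0, 0, 1, 1, 0, 0],
     ![1, 0, 1, 0, 1, 0, 1, 0], ![0, 1, 0, 1, 0, 1, 0, 1]}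

/-- The laminated lattice `Λ₈ = {x ∈ ℤ⁸ : x mod 2 ∈ H} ≅ √2·E₈`. -/
def Λ8 : Submodule ℤ (E 8) :=
  Submodule.span ℤ
    {v : E 8 | ∃ x : Fin 8 → ℤ, (fun i => (x i : ZMod 2)) ∈ code8 ∧ v = intVec x}

/-- The dual lattice `Λ♯ = {x : ⟪x,y⟫ ∈ ℤ for all y ∈ Λ}`. -/
def dualLattice {n : ℕ} (Λ : Submodule ℤ (E n)) : Submodule ℤ (E n) where
  carrier := {x | ∀ y ∈ Λ, ∃ k : ℤ, ⟪x, y⟫ = (k : ℝ)}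
  zero_mem' := fun y _ => ⟨0, by simp⟩
  add_mem' := by
    intro a b ha hb y hy
    obtain ⟨k, hk⟩ := ha y hy
    obtain ⟨l, hl⟩ := hb y hy
    exact ⟨k + l, by rw [inner_add_left, hk, hl]; push_cast; ring⟩
  smul_mem' := by
    intro c x hx y hy
    obtain ⟨k, hk⟩ := hx y hy
    refine ⟨c * k, ?_⟩
    rw [← Int.cast_smul_eq_zsmul ℝ c x, real_inner_smul_left, hk]
    push_cast
    ring

/-- The quotient abelian group `Λ♯/Λ`. -/
abbrev DualQuot {n : ℕ} (Λ : Submodule ℤ (E n)) :=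
  (dualLattice Λ) ⧸ (Λ.comap (dualLattice Λ).subtype)

/-- The coset `c ∈ Λ♯/Λ` has minimal norm `m`, i.e. `m` is the minimum of `‖x‖²`
over `x` in the coset `c`. -/
def CosetMinNorm {n : ℕ} (Λ : Submodule ℤ (E n)) (c : DualQuot Λ) (m : ℝ) : Prop :=
  IsLeast {r : ℝ | ∃ x : dualLattice Λ, Submodule.Quotient.mk x = c ∧ r = ‖(x : E n)‖ ^ 2} m

/-!
Since `H` is self-dual, `Λ8♯ = ½ Λ8`. Write a vector of `Λ8` as `x = c + 2 s + 4 t` with `c`, `s`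
binary; then `c ∈ H`, and the class of `x` modulo `2 Λ8` is determined by `c` and the coset `s + H`.
For given `c` and `s` the shortest `x` has coordinates `0`, `2` where `c` vanishes and `1`, `-1`
elsewhere, so its squared norm is `wt c + 4 #{i | c i = 0 ∧ s i = 1}`. The minimal norm of the coset
of `½ x` is a quarter of the least such value over `s + H`, which leaves a finite computation over
`H × 𝔽₂⁸/H`, a set of `16 · 16 = 256` pairs.
-/

open Finset Matrix

lemma isLeast_iff_of_subset_of_forall_exists_le {α : Type*} [PartialOrder α] {S T : Set α} {a : α}
    (subset : S ⊆ T) (exists_le : ∀ t ∈ T, ∃ s ∈ S, s ≤ t) : IsLeast S a ↔ IsLeast T a := by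
  constructor
  · rintro ⟨mem, lower⟩
    refine ⟨subset mem, fun t ht => ?_⟩
    obtain ⟨s, hs, le⟩ := exists_le t ht
    exact (lower hs).trans le
  · rintro ⟨mem, lower⟩
    obtain ⟨s, hs, le⟩ := exists_le a mem
    obtain rfl := le.antisymm (lower (subset hs))
    exact ⟨hs, fun t ht => lower (subset ht)⟩

section ConstructionA

variable {n : ℕ} {C : Submodule (ZMod 2) (Fin n → ZMod 2)} {x y z : Fin n → ℤ}
  {c c' s s' : Fin n → ZMod 2}

/-- The map `intVec`, which embeds `ℤ^n` into `ℝ^n`, as a linear map. -/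
def intVecLinearMap (n : ℕ) : (Fin n → ℤ) →ₗ[ℤ] E n where
  toFun := intVec
  map_add' x y := by ext i; simp [intVec]
  map_smul' a x := by ext i; simp [intVec, ← Int.cast_smul_eq_zsmul ℝ]

/-- Coordinatewise reduction `ℤ^n → 𝔽₂^n`. -/
def reduceTwo (n : ℕ) : (Fin n → ℤ) →ₗ[ℤ] (Fin n → ZMod 2) :=
  (Int.castAddHom (ZMod 2)).toIntLinearMap.compLeft (Fin n)

/-- The lattice `{x ∈ ℤ^n : x mod 2 ∈ C}` attached to a binary code `C` by Construction A,
without the usual scaling by `1 / √2`. -/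
def constructionA (C : Submodule (ZMod 2) (Fin n → ZMod 2)) : Submodule ℤ (E n) :=
  ((C.restrictScalars ℤ).comap (reduceTwo n)).map (intVecLinearMap n)

/-- The dual of a binary code with respect to the standard dot product. -/
def dualCode (C : Submodule (ZMod 2) (Fin n → ZMod 2)) : Submodule (ZMod 2) (Fin n → ZMod 2) :=
  C.orthogonalBilin (dotProductBilin (ZMod 2) (ZMod 2))

lemma mem_dualCode : c ∈ dualCode C ↔ ∀ d ∈ C, d ⬝ᵥ c = 0 := Iff.rfl

lemma intVec_injective : Function.Injective (intVec : (Fin n → ℤ) → E n) := fun _ _ h =>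
  funext fun i => Int.cast_injective (α := ℝ) (congrArg (fun v : E n => v i) h)

lemma intVec_nsmul (k : ℕ) (x : Fin n → ℤ) : intVec (k • x) = k • intVec x :=
  map_nsmul (intVecLinearMap n) k x

lemma intVec_sub (x y : Fin n → ℤ) : intVec (x - y) = intVec x - intVec y :=
  map_sub (intVecLinearMap n) x y

lemma inner_intVec_intVec (x y : Fin n → ℤ) : ⟪intVec x, intVec y⟫ = ((x ⬝ᵥ y : ℤ) : ℝ) := by
  simp [PiLp.inner_apply, intVec, dotProduct, mul_comm]

lemma reduceTwo_natCast_val (c : Fin n → ZMod 2) :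
    reduceTwo n (fun i => ((c i).val : ℤ)) = c := by
  ext i
  simp [reduceTwo]

lemma reduceTwo_two_nsmul (x : Fin n → ℤ) : reduceTwo n (2 • x) = 0 := by
  rw [map_nsmul, two_nsmul]
  exact funext fun _ => CharTwo.add_self_eq_zero _

lemma reduceTwo_dotProduct_eq_zero_iff :
    reduceTwo n x ⬝ᵥ reduceTwo n y = 0 ↔ Even (x ⬝ᵥ y) := by
  rw [← ZMod.intCast_eq_zero_iff_even]
  simp [reduceTwo, dotProduct]

lemma intVec_mem_constructionA_iff : intVec x ∈ constructionA C ↔ reduceTwo n x ∈ C :=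
  intVec_injective.mem_set_image

lemma reduceTwo_mem_dualCode_iff :
    reduceTwo n z ∈ dualCode C ↔ ∀ x, reduceTwo n x ∈ C → Even (x ⬝ᵥ z) := by
  simp only [mem_dualCode, ← reduceTwo_dotProduct_eq_zero_iff]
  refine ⟨fun h x hx => h _ hx, fun h c hc => ?_⟩
  rw [← reduceTwo_natCast_val c] at hc ⊢
  exact h _ hc

lemma two_nsmul_half_smul (v : E n) : 2 • ((2⁻¹ : ℝ) • v) = v := by
  rw [two_nsmul, ← add_smul]
  norm_num

lemma half_intVec_mem_constructionA_iff :
    (2⁻¹ : ℝ) • intVec z ∈ constructionA C ↔ ∃ u, reduceTwo n u ∈ C ∧ 2 • u = z := by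
  refine exists_congr fun u => and_congr_right fun _ => ?_
  change intVec u = _ ↔ _
  rw [← intVec_injective.eq_iff, intVec_nsmul, eq_inv_smul_iff₀ two_ne_zero, ofNat_smul_eq_nsmul]

lemma half_intVec_mem_dualLattice_iff :
    (2⁻¹ : ℝ) • intVec z ∈ dualLattice (constructionA C) ↔ reduceTwo n z ∈ dualCode C := by
  have inner_half (x) : ⟪(2⁻¹ : ℝ) • intVec z, intVec x⟫ = ((x ⬝ᵥ z : ℤ) : ℝ) / 2 := by
    rw [real_inner_smul_left, inner_intVec_intVec, dotProduct_comm, inv_mul_eq_div]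
  rw [reduceTwo_mem_dualCode_iff]
  constructor
  · intro h x hx
    obtain ⟨k, hk⟩ := h _ (intVec_mem_constructionA_iff.2 hx)
    rw [inner_half, div_eq_iff two_ne_zero] at hk
    exact even_iff_exists_two_mul.2 ⟨k, by rw [mul_comm]; exact_mod_cast hk⟩
  · rintro h _ ⟨x, hx, rfl⟩
    obtain ⟨k, hk⟩ := even_iff_exists_two_mul.1 (h x hx)
    refine ⟨k, (inner_half x).trans ?_⟩
    rw [hk, Int.cast_mul, Int.cast_ofNat, mul_div_cancel_left₀ _ two_ne_zero]

lemma exists_half_intVec_eq {v : E n} (hv : v ∈ dualLattice (constructionA C)) :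
    ∃ z, reduceTwo n z ∈ dualCode C ∧ (2⁻¹ : ℝ) • intVec z = v := by
  have two_mul_coord (i : Fin n) : ∃ k : ℤ, (k : ℝ) = 2 * v i := by
    have mem : intVec (2 • Pi.single i 1) ∈ constructionA C := by
      rw [intVec_mem_constructionA_iff, reduceTwo_two_nsmul]
      exact zero_mem C
    obtain ⟨k, hk⟩ := hv _ mem
    refine ⟨k, hk.symm.trans ?_⟩
    simp [PiLp.inner_apply, intVec, Pi.single_apply]
  choose z hz using two_mul_coord
  have half_z : (2⁻¹ : ℝ) • intVec z = v := by
    ext i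
    simp [intVec, hz]
  exact ⟨z, half_intVec_mem_dualLattice_iff.1 (half_z ▸ hv), half_z⟩

/-- The balanced residue of `c + 2s` modulo `4`, with `c` and `s` lifted to `{0, 1}`: the integer of
least absolute value with binary digits `c`, `s`. -/
def shortInt (c s : ZMod 2) : ℤ :=
  if c = 0 then if s = 0 then 0 else 2 else if s = 0 then 1 else -1

/-- The vector of `ℤ^n` with coordinates `shortInt (c i) (s i)`, a shortest one in its class
modulo `4ℤ^n`. -/
def shortLift (c s : Fin n → ZMod 2) : Fin n → ℤ := fun i => shortInt (c i) (s i)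

/-- The squared norm of `shortLift c s`. -/
def shortWeight (c s : Fin n → ZMod 2) : ℕ := hammingNorm c + 4 * #{i | c i = 0 ∧ s i ≠ 0}

lemma intCast_shortInt (c s : ZMod 2) : (shortInt c s : ZMod 2) = c := by
  decide +revert

lemma exists_shortInt (a : ℤ) :
    ∃ s t, a = shortInt a s + 2 * (2 * t) ∧ |shortInt a s| ≤ |a| := by
  obtain ⟨q, r, ha, hr⟩ : ∃ q r, a = r + 2 * (2 * q) ∧ r ∈ ({0, 1, 2, -1} : Set ℤ) := by
    have : a % 4 = 0 ∨ a % 4 = 1 ∨ a % 4 = 2 ∨ a % 4 = 3 := by omega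
    rcases this with h | h | h | h
    · exact ⟨a / 4, 0, by omega, by simp⟩
    · exact ⟨a / 4, 1, by omega, by simp⟩
    · exact ⟨a / 4, 2, by omega, by simp⟩
    · exact ⟨a / 4 + 1, -1, by omega, by simp⟩
  have digit : (a : ZMod 2) = r := by
    rw [ha, Int.cast_add, Int.cast_mul, Int.cast_ofNat, CharTwo.two_eq_zero (R := ZMod 2), zero_mul,
      add_zero]
  obtain ⟨s, hs⟩ : ∃ s, shortInt r s = r := by
    rcases hr with rfl | rfl | rfl | rfl <;> decide
  have abs_le : |r| ≤ |a| := by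
    rcases hr with rfl | rfl | rfl | rfl <;> (rw [Int.abs_eq_natAbs, Int.abs_eq_natAbs]; omega)
  exact ⟨s, q, by rwa [digit, hs], by rwa [digit, hs]⟩

lemma exists_two_mul_eq_shortInt_sub (c s s' : ZMod 2) :
    ∃ u : ℤ, (u : ZMod 2) = s - s' ∧ 2 * u = shortInt c s - shortInt c s' :=
  ⟨(shortInt c s - shortInt c s') / 2, by decide +revert, by decide +revert⟩

lemma reduceTwo_shortLift (c s : Fin n → ZMod 2) : reduceTwo n (shortLift c s) = c :=
  funext fun i => intCast_shortInt (c i) (s i)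

lemma dotProduct_shortLift_self (c s : Fin n → ZMod 2) :
    shortLift c s ⬝ᵥ shortLift c s = shortWeight c s := by
  have sq_shortInt (c s : ZMod 2) : shortInt c s * shortInt c s =
      (if c ≠ 0 then 1 else 0) + 4 * if c = 0 ∧ s ≠ 0 then 1 else 0 := by
    decide +revert
  simp only [dotProduct, shortLift, sq_shortInt, shortWeight, hammingNorm, sum_add_distrib,
    ← mul_sum, sum_boole, Nat.cast_add, Nat.cast_mul, Nat.cast_ofNat]

lemma exists_shortLift (z : Fin n → ℤ) :
    ∃ s t, z = shortLift (reduceTwo n z) s + 2 • (2 • t) ∧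
      shortLift (reduceTwo n z) s ⬝ᵥ shortLift (reduceTwo n z) s ≤ z ⬝ᵥ z := by
  choose s t eq abs_le using fun i => exists_shortInt (z i)
  exact ⟨s, t, funext fun i => by simpa [shortLift, reduceTwo, two_mul] using eq i,
    sum_le_sum fun i _ => abs_le_iff_mul_self_le.1 (abs_le i)⟩

lemma shortLift_sub_shortLift_mem_iff :
    (∃ u, reduceTwo n u ∈ C ∧ 2 • u = shortLift c s - shortLift c' s') ↔
      c = c' ∧ s - s' ∈ C := by
  suffices c = c' → ((∃ u, reduceTwo n u ∈ C ∧ 2 • u = shortLift c s - shortLift c' s') ↔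
      s - s' ∈ C) by
    refine ⟨fun h => ?_, fun ⟨hc, hs⟩ => (this hc).2 hs⟩
    obtain ⟨u, -, hu⟩ := id h
    have hc : c = c' := by
      rw [← sub_eq_zero, ← reduceTwo_shortLift c s, ← reduceTwo_shortLift c' s', ← map_sub, ← hu,
        reduceTwo_two_nsmul]
    exact ⟨hc, (this hc).1 h⟩
  rintro rfl
  choose u reduce_u two_u using fun i => exists_two_mul_eq_shortInt_sub (c i) (s i) (s' i)
  have two_nsmul_u : 2 • u = shortLift c s - shortLift c s' :=
    funext fun i => by simpa [shortLift] using two_u i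
  have reduceTwo_u : reduceTwo n u = s - s' := funext reduce_u
  rw [← two_nsmul_u, ← reduceTwo_u]
  refine ⟨fun ⟨w, hw, eq⟩ => ?_, fun hu => ⟨u, hu, rfl⟩⟩
  rwa [← nsmul_right_injective two_ne_zero eq]

lemma norm_half_intVec_sq (z : Fin n → ℤ) :
    ‖(2⁻¹ : ℝ) • (intVec z : E n)‖ ^ 2 = ((z ⬝ᵥ z : ℤ) : ℝ) / 4 := by
  rw [norm_smul, mul_pow, ← real_inner_self_eq_norm_sq (intVec z), inner_intVec_intVec, norm_inv,
    Real.norm_ofNat]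
  ring

lemma half_shortLift_mem_dualLattice (hC : dualCode C = C) (hc : c ∈ C)
    (s : Fin n → ZMod 2) :
    (2⁻¹ : ℝ) • intVec (shortLift c s) ∈ dualLattice (constructionA C) := by
  rwa [half_intVec_mem_dualLattice_iff, reduceTwo_shortLift, hC]

/-- The coset of half of `shortLift c s` in the discriminant group of the Construction A lattice of
a self-dual code. -/
def halfCoset (hC : dualCode C = C) (c : C) (s : Fin n → ZMod 2) : DualQuot (constructionA C) :=
  Submodule.Quotient.mk ⟨_, half_shortLift_mem_dualLattice hC c.2 s⟩

lemma halfCoset_eq_iff (hC : dualCode C = C) {c c' : C} :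
    halfCoset hC c s = halfCoset hC c' s' ↔ c = c' ∧ s - s' ∈ C := by
  rw [halfCoset, halfCoset, Submodule.Quotient.eq, Submodule.mem_comap, Submodule.subtype_apply,
    Submodule.coe_sub, ← smul_sub, ← intVec_sub, half_intVec_mem_constructionA_iff,
    shortLift_sub_shortLift_mem_iff, Subtype.ext_iff]

lemma exists_halfCoset_eq_mk (hC : dualCode C = C) (x : dualLattice (constructionA C)) :
    ∃ c s, halfCoset hC c s = Submodule.Quotient.mk x ∧
      (shortWeight (c : Fin n → ZMod 2) s : ℝ) / 4 ≤ ‖(x : E n)‖ ^ 2 := by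
  obtain ⟨z, z_mem, hz⟩ := exists_half_intVec_eq x.2
  rw [hC] at z_mem
  obtain ⟨s, t, eq, norm_le⟩ := exists_shortLift z
  refine ⟨⟨_, z_mem⟩, s, ?_, ?_⟩
  · rw [halfCoset, eq_comm, Submodule.Quotient.eq, Submodule.mem_comap, Submodule.subtype_apply,
      Submodule.coe_sub, ← hz, ← smul_sub, ← intVec_sub, half_intVec_mem_constructionA_iff]
    refine ⟨2 • t, ?_, eq_sub_of_add_eq' eq.symm⟩
    rw [reduceTwo_two_nsmul]
    exact zero_mem C
  · rw [← hz, norm_half_intVec_sq]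
    rw [dotProduct_shortLift_self] at norm_le
    gcongr
    exact_mod_cast norm_le

lemma exists_norm_sq_eq_shortWeight (hC : dualCode C = C) (c : C) (s : Fin n → ZMod 2) (h : C) :
    ∃ x : dualLattice (constructionA C), Submodule.Quotient.mk x = halfCoset hC c s ∧
      (shortWeight (c : Fin n → ZMod 2) (s + h) : ℝ) / 4 = ‖(x : E n)‖ ^ 2 := by
  refine ⟨_, (halfCoset_eq_iff hC (s := s + (h : Fin n → ZMod 2))).2 ⟨rfl, by simp⟩, ?_⟩
  rw [norm_half_intVec_sq, dotProduct_shortLift_self, Int.cast_natCast]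

lemma exists_shortWeight_le_norm_sq (hC : dualCode C = C) {c : C}
    {x : dualLattice (constructionA C)} (hx : Submodule.Quotient.mk x = halfCoset hC c s) :
    ∃ h : C, (shortWeight (c : Fin n → ZMod 2) (s + h) : ℝ) / 4 ≤ ‖(x : E n)‖ ^ 2 := by
  obtain ⟨c', s', eq, le⟩ := exists_halfCoset_eq_mk hC x
  obtain ⟨rfl, hs⟩ := (halfCoset_eq_iff hC).1 (eq.trans hx)
  exact ⟨⟨_, hs⟩, by rwa [add_sub_cancel]⟩

theorem cosetMinNorm_halfCoset_iff (hC : dualCode C = C) {c : C} {m : ℕ} :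
    CosetMinNorm (constructionA C) (halfCoset hC c s) m ↔
      IsLeast (Set.range fun h : C => shortWeight (c : Fin n → ZMod 2) (s + h)) (4 * m) := by
  have strictMono_div : StrictMono fun w : ℕ => (w : ℝ) / 4 := fun v w hvw =>
    div_lt_div_of_pos_right (Nat.cast_lt.2 hvw) four_pos
  have m_eq : (m : ℝ) = ((4 * m : ℕ) : ℝ) / 4 := by
    rw [Nat.cast_mul, Nat.cast_ofNat, mul_div_cancel_left₀ _ four_ne_zero]
  rw [← strictMono_div.map_isLeast, ← m_eq, CosetMinNorm]
  refine (isLeast_iff_of_subset_of_forall_exists_le ?_ ?_).symm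
  · rintro _ ⟨_, ⟨h, rfl⟩, rfl⟩
    exact exists_norm_sq_eq_shortWeight hC c s h
  · rintro _ ⟨x, hx, rfl⟩
    obtain ⟨h, hh⟩ := exists_shortWeight_le_norm_sq hC hx
    exact ⟨_, ⟨_, ⟨h, rfl⟩, rfl⟩, hh⟩

lemma halfCoset_zero_zero (hC : dualCode C = C) : halfCoset hC 0 0 = 0 := by
  rw [halfCoset, Submodule.Quotient.mk_eq_zero, Submodule.mem_comap, Submodule.subtype_apply,
    half_intVec_mem_constructionA_iff]
  exact ⟨0, by simp, rfl⟩

lemma addOrderOf_dualQuot_constructionA (hC : dualCode C ≤ C) {q : DualQuot (constructionA C)}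
    (hq : q ≠ 0) : addOrderOf q = 2 := by
  refine addOrderOf_eq_prime ?_ hq
  obtain ⟨x, rfl⟩ := Submodule.Quotient.mk_surjective _ q
  obtain ⟨z, z_mem, hz⟩ := exists_half_intVec_eq x.2
  rw [← Submodule.Quotient.mk_smul, Submodule.Quotient.mk_eq_zero, Submodule.mem_comap,
    map_nsmul, Submodule.subtype_apply, ← hz, two_nsmul_half_smul]
  exact intVec_mem_constructionA_iff.2 (hC z_mem)

end ConstructionA

section Code8

lemma Λ8_eq_constructionA : Λ8 = constructionA code8 := by
  rw [← Submodule.span_eq (constructionA code8), Λ8]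
  congr 1
  ext v
  exact exists_congr fun x => and_congr_right fun _ => eq_comm

/-- The generator matrix of `code8` given by its defining spanning set. -/
def generator8 : Matrix (Fin 4) (Fin 8) (ZMod 2) :=
  !![1, 1, 1, 1, 0, 0, 0, 0;
     1, 1, 0, 0, 1, 1, 0, 0;
     1, 0, 1, 0, 1, 0, 1, 0;
     0, 1, 0, 1, 0, 1, 0, 1]

/-- A right inverse of `generator8`. As `generator8` is also a parity check matrix of `code8`, the
vectors `rightInverse8 *ᵥ b` represent the cosets of `code8`, each one once. -/
def rightInverse8 : Matrix (Fin 8) (Fin 4) (ZMod 2) :=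
  !![0, 0, 0, 0;
     0, 0, 0, 0;
     1, 0, 0, 0;
     0, 0, 0, 0;
     0, 1, 0, 0;
     0, 0, 0, 0;
     1, 1, 1, 0;
     0, 0, 0, 1]

lemma generator8_mul_rightInverse8 : generator8 * rightInverse8 = 1 := by decide +kernel

lemma generator8_mul_transpose : generator8 * generator8ᵀ = 0 := by decide +kernel

lemma vecMul_eq_of_generator8_mulVec_eq_zero :
    ∀ x, generator8 *ᵥ x = 0 → (x ᵥ* rightInverse8) ᵥ* generator8 = x := by
  decide +kernel

lemma code8_eq_range : code8 = LinearMap.range generator8.vecMulLinear := by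
  rw [range_vecMulLinear, code8]
  congr 1
  change _ = Set.range ![![1, 1, 1, 1, 0, 0, 0, 0], ![1, 1, 0, 0, 1, 1, 0, 0],
    ![1, 0, 1, 0, 1, 0, 1, 0], ![0, 1, 0, 1, 0, 1, 0, 1]]
  simp only [range_cons, range_empty, Set.union_empty, Set.singleton_union]

lemma mem_code8_iff_exists {x : Fin 8 → ZMod 2} : x ∈ code8 ↔ ∃ a, a ᵥ* generator8 = x := by
  rw [code8_eq_range]; rfl

lemma mem_code8_iff_mulVec_eq_zero {x : Fin 8 → ZMod 2} : x ∈ code8 ↔ generator8 *ᵥ x = 0 := by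
  rw [mem_code8_iff_exists]
  refine ⟨?_, fun h => ⟨_, vecMul_eq_of_generator8_mulVec_eq_zero x h⟩⟩
  rintro ⟨a, rfl⟩
  rw [← mulVec_transpose, mulVec_mulVec, generator8_mul_transpose, zero_mulVec]

lemma dualCode_code8 : dualCode code8 = code8 := by
  ext x
  simp_rw [mem_dualCode, mem_code8_iff_mulVec_eq_zero (x := x), mem_code8_iff_exists,
    forall_exists_index, forall_apply_eq_imp_iff, ← dotProduct_mulVec]
  exact ⟨fun h => dotProduct_eq_zero _ fun a => by rw [dotProduct_comm, h], fun h a => by simp [h]⟩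

/-- The codeword of `code8` with message `a`. -/
def encode8 (a : Fin 4 → ZMod 2) : code8 := ⟨a ᵥ* generator8, mem_code8_iff_exists.2 ⟨a, rfl⟩⟩

lemma encode8_bijective : Function.Bijective encode8 := by
  constructor
  · intro a a' h
    have := congrArg (fun x : code8 => (x : Fin 8 → ZMod 2) ᵥ* rightInverse8) h
    simpa only [encode8, vecMul_vecMul, generator8_mul_rightInverse8, vecMul_one] using this
  · rintro ⟨x, hx⟩
    obtain ⟨a, rfl⟩ := mem_code8_iff_exists.1 hx
    exact ⟨a, rfl⟩

/-- The enumeration of the discriminant group of `Λ8` by pairs consisting of a codeword and a coset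
of `code8`. -/
def coset8 (p : (Fin 4 → ZMod 2) × (Fin 4 → ZMod 2)) : DualQuot (constructionA code8) :=
  halfCoset dualCode_code8 (encode8 p.1) (rightInverse8 *ᵥ p.2)

lemma coset8_bijective : Function.Bijective coset8 := by
  have syndrome (b) : generator8 *ᵥ (rightInverse8 *ᵥ b) = b := by
    rw [mulVec_mulVec, generator8_mul_rightInverse8, one_mulVec]
  constructor
  · rintro ⟨a, b⟩ ⟨a', b'⟩ h
    obtain ⟨ha, hb⟩ := (halfCoset_eq_iff _).1 h
    rw [mem_code8_iff_mulVec_eq_zero, mulVec_sub, syndrome, syndrome, sub_eq_zero] at hb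
    exact Prod.ext (encode8_bijective.1 ha) hb
  · intro q
    obtain ⟨x, rfl⟩ := Submodule.Quotient.mk_surjective _ q
    obtain ⟨c, s, eq, -⟩ := exists_halfCoset_eq_mk dualCode_code8 x
    obtain ⟨a, rfl⟩ := encode8_bijective.2 c
    refine ⟨(a, generator8 *ᵥ s), Eq.trans ((halfCoset_eq_iff _).2 ⟨rfl, ?_⟩) eq⟩
    rw [mem_code8_iff_mulVec_eq_zero, mulVec_sub, syndrome, sub_self]

/-- `IsMinWeight8 p w` says that `w` is the least squared norm of the integer vectors of the form
`shortLift c s`, where `c` and the coset of `s` are given by `p`. -/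
def IsMinWeight8 (p : (Fin 4 → ZMod 2) × (Fin 4 → ZMod 2)) (w : ℕ) : Prop :=
  IsLeast (Set.range fun a => shortWeight (p.1 ᵥ* generator8)
    (rightInverse8 *ᵥ p.2 + a ᵥ* generator8)) w

instance (p : (Fin 4 → ZMod 2) × (Fin 4 → ZMod 2)) (w : ℕ) : Decidable (IsMinWeight8 p w) :=
  decidable_of_iff ((∃ _, _ = w) ∧ ∀ _, w ≤ _) (and_congr_right' Set.forall_mem_range.symm)

lemma cosetMinNorm_coset8_iff {p : (Fin 4 → ZMod 2) × (Fin 4 → ZMod 2)} {m : ℕ} :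
    CosetMinNorm (constructionA code8) (coset8 p) m ↔ IsMinWeight8 p (4 * m) := by
  rw [coset8, cosetMinNorm_halfCoset_iff, ← encode8_bijective.2.range_comp]
  rfl

lemma ncard_cosetMinNorm (m : ℕ) :
    {q | CosetMinNorm (constructionA code8) q m}.ncard = #{p | IsMinWeight8 p (4 * m)} := by
  rw [← Set.ncard_coe_finset, ← Set.ncard_preimage_of_injective_subset_range coset8_bijective.1
    (by simp [coset8_bijective.2.range_eq])]
  simp [cosetMinNorm_coset8_iff]

lemma isMinWeight8_four_or_eight :
    ∀ p, p = 0 ∨ IsMinWeight8 p 4 ∨ IsMinWeight8 p 8 := by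
  decide +kernel

lemma card_isMinWeight8_four : #{p | IsMinWeight8 p 4} = 120 := by decide +kernel

lemma card_isMinWeight8_eight : #{p | IsMinWeight8 p 8} = 135 := by decide +kernel

lemma coset8_zero : coset8 0 = 0 := by
  have encode8_zero : encode8 0 = 0 := Subtype.ext (zero_vecMul generator8)
  rw [coset8, Prod.fst_zero, Prod.snd_zero, encode8_zero, mulVec_zero, halfCoset_zero_zero]

lemma eq_zero_or_cosetMinNorm (q : DualQuot (constructionA code8)) :
    q = 0 ∨ CosetMinNorm _ q (1 : ℕ) ∨ CosetMinNorm _ q (2 : ℕ) := by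
  obtain ⟨p, rfl⟩ := coset8_bijective.2 q
  rw [cosetMinNorm_coset8_iff, cosetMinNorm_coset8_iff]
  exact (isMinWeight8_four_or_eight p).imp_left (by rintro rfl; exact coset8_zero)

lemma card_dualQuot_code8 : Nat.card (DualQuot (constructionA code8)) = 256 := by
  rw [← Nat.card_eq_of_bijective _ coset8_bijective]
  simp

end Code8

/-- The quotient `Λ₈♯/Λ₈` has exactly 256 elements: the zero coset, 120 cosets of
minimal norm 1, and 135 cosets of minimal norm 2; every nonzero coset has order 2. -/
theorem Λ8_dual_quotient_classes :
    Nat.card (DualQuot Λ8) = 256 ∧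
    (∀ c : DualQuot Λ8, c = 0 ∨ CosetMinNorm Λ8 c 1 ∨ CosetMinNorm Λ8 c 2) ∧
    {c : DualQuot Λ8 | CosetMinNorm Λ8 c 1}.ncard = 120 ∧
    {c : DualQuot Λ8 | CosetMinNorm Λ8 c 2}.ncard = 135 ∧
    (∀ c : DualQuot Λ8, c ≠ 0 → addOrderOf c = 2) := by
  rw [Λ8_eq_constructionA, ← Nat.cast_one, ← Nat.cast_ofNat (R := ℝ)]
  exact ⟨card_dualQuot_code8, eq_zero_or_cosetMinNorm,
    (ncard_cosetMinNorm 1).trans card_isMinWeight8_four,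
    (ncard_cosetMinNorm 2).trans card_isMinWeight8_eight,
    fun _ => addOrderOf_dualQuot_constructionA dualCode_code8.le⟩
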